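/- For any α > 0 there exists a constant c = c(α) ≥ 1 such that for all a, b ∈ ℝ^N, N ∈ ℕ, one has (1/c)|b^⟨α⟩ − a^⟨α⟩| ≤ (|a| + |b|)^{α−1}|b − a| ≤ c |b^⟨α⟩ − a^⟨α⟩|. -/

import Mathlib

open MeasureTheory Set
open scoped ENNReal

noncomputable section

abbrev Vec (N : ℕ) := EuclideanSpace ℝ (Fin N)

/-- The power `w^⟨α⟩ := |w|^{α−1} w` of a vector (interpreted as `0` when `w = 0`). -/
def pw {N : ℕ} (α : ℝ) (w : Vec N) : Vec N := ‖w‖ ^ (α - 1) • w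

/-!
The map `w ↦ w^⟨α⟩` distorts distances at scale `r` by a factor comparable to `r ^ (α - 1)`.
With `r = max ‖a‖ ‖b‖`, say `r = ‖b‖`, the splitting
`b^⟨α⟩ - a^⟨α⟩ = ‖b‖ ^ (α - 1) • (b - a) + (‖b‖ ^ (α - 1) - ‖a‖ ^ (α - 1)) • a`
reduces the upper bound to a one-dimensional mean value estimate. The inverse map is
`w ↦ w^⟨1/α⟩`, so the lower bound is the upper bound for the exponent `1/α` applied to
`a^⟨α⟩` and `b^⟨α⟩`. Finally `r ≤ ‖a‖ + ‖b‖ ≤ 2 r`.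
-/

section RealPower

variable {α s t : ℝ}

lemma rpow_sub_one_mul_self (ht : 0 ≤ t) (hα : α ≠ 0) : t ^ (α - 1) * t = t ^ α := by
  rw [← Real.rpow_add_one' ht (by simpa using hα), sub_add_cancel]

lemma rpow_sub_rpow_le_of_one_le (hα : 1 ≤ α) (hs : 0 ≤ s) (hst : s ≤ t) :
    t ^ α - s ^ α ≤ α * (t ^ (α - 1) * (t - s)) := by
  rcases hst.eq_or_lt with rfl | hst
  · simp
  have slope_le : slope (· ^ α) s t ≤ α * t ^ (α - 1) :=
    (convexOn_rpow hα).slope_le_of_hasDerivAt hs (hs.trans hst.le) hst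
      (Real.hasDerivAt_rpow_const (.inr hα))
  rwa [slope_def_field, div_le_iff₀ (sub_pos.2 hst), mul_assoc] at slope_le

lemma rpow_sub_rpow_le_of_le_one (hα : 0 < α) (hα₁ : α ≤ 1) (hs : 0 ≤ s) (hst : s ≤ t) :
    t ^ α - s ^ α ≤ t ^ (α - 1) * (t - s) := by
  have antitone : t ^ (α - 1) * s ≤ s ^ (α - 1) * s := by
    rcases hs.eq_or_lt with rfl | hs
    · simp
    · gcongr ?_ * s
      exact Real.rpow_le_rpow_of_nonpos hs hst (by linarith)
  rw [mul_sub, rpow_sub_one_mul_self (hs.trans hst) hα.ne']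
  rw [rpow_sub_one_mul_self hs hα.ne'] at antitone
  linarith

lemma rpow_sub_rpow_le (hα : 0 < α) (hs : 0 ≤ s) (hst : s ≤ t) :
    t ^ α - s ^ α ≤ max 1 α * (t ^ (α - 1) * (t - s)) := by
  rcases le_total 1 α with h | h
  · rw [max_eq_right h]
    exact rpow_sub_rpow_le_of_one_le h hs hst
  · rw [max_eq_left h, one_mul]
    exact rpow_sub_rpow_le_of_le_one hα h hs hst

-- The left side is the distance between `t ^ α - s ^ α` and `t ^ (α - 1) * (t - s)`, and both
-- lie between `0` and the right side.
lemma abs_rpow_sub_one_sub_rpow_sub_one_mul_le (hα : 0 < α) (hs : 0 ≤ s) (hst : s ≤ t) :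
    |t ^ (α - 1) - s ^ (α - 1)| * s ≤ max 1 α * (t ^ (α - 1) * (t - s)) := by
  have ht : 0 ≤ t := hs.trans hst
  have linear_nonneg : 0 ≤ t ^ (α - 1) * (t - s) :=
    mul_nonneg (by positivity) (sub_nonneg.2 hst)
  calc |t ^ (α - 1) - s ^ (α - 1)| * s
      = |(t ^ α - s ^ α) - t ^ (α - 1) * (t - s)| := by
        rw [← abs_of_nonneg hs, ← abs_mul, abs_of_nonneg hs, ← rpow_sub_one_mul_self hs hα.ne',
          ← rpow_sub_one_mul_self ht hα.ne']
        ring_nf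
    _ ≤ max 1 α * (t ^ (α - 1) * (t - s)) :=
        abs_sub_le_of_nonneg_of_le (sub_nonneg.2 (by gcongr)) (rpow_sub_rpow_le hα hs hst)
          linear_nonneg (le_mul_of_one_le_left linear_nonneg (le_max_left 1 α))

lemma rpow_le_rpow_abs_mul_rpow {K : ℝ} (β : ℝ) (hK : 0 < K) (hs : 0 ≤ s) (ht : 0 ≤ t)
    (hst : s ≤ K * t) (hts : t ≤ K * s) : s ^ β ≤ K ^ |β| * t ^ β := by
  rcases le_or_gt 0 β with hβ | hβ
  · rw [abs_of_nonneg hβ, ← Real.mul_rpow hK.le ht]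
    gcongr
  rcases ht.eq_or_lt with rfl | ht
  · obtain rfl : s = 0 := le_antisymm (by simpa using hst) hs
    simp [Real.zero_rpow hβ.ne]
  · rw [abs_of_neg hβ, Real.rpow_neg hK.le, ← div_eq_inv_mul, le_div_iff₀' (by positivity),
      ← Real.mul_rpow hK.le hs]
    exact Real.rpow_le_rpow_of_nonpos ht hts hβ.le

lemma max_rpow_le_two_rpow_mul_add_rpow (β : ℝ) (hs : 0 ≤ s) (ht : 0 ≤ t) :
    max s t ^ β ≤ 2 ^ |β| * (s + t) ^ β :=
  rpow_le_rpow_abs_mul_rpow β two_pos (le_max_of_le_left hs) (by positivity)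
    (by linarith [max_le_add_of_nonneg hs ht]) (by linarith [le_max_left s t, le_max_right s t])

lemma add_rpow_le_two_rpow_mul_max_rpow (β : ℝ) (hs : 0 ≤ s) (ht : 0 ≤ t) :
    (s + t) ^ β ≤ 2 ^ |β| * max s t ^ β :=
  rpow_le_rpow_abs_mul_rpow β two_pos (by positivity) (le_max_of_le_left hs)
    (by linarith [le_max_left s t, le_max_right s t]) (by linarith [max_le_add_of_nonneg hs ht])

end RealPower

section NormPower

variable {E : Type*} [NormedAddCommGroup E] [NormedSpace ℝ E] {α : ℝ}

/-- The power `w^⟨α⟩ = ‖w‖ ^ (α - 1) • w` in a real normed space. It extends `pw` beyond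
Euclidean spaces and vanishes at `w = 0` whatever value `0 ^ (α - 1)` takes. -/
def normPow (α : ℝ) (w : E) : E := ‖w‖ ^ (α - 1) • w

lemma norm_normPow (hα : α ≠ 0) (w : E) : ‖normPow α w‖ = ‖w‖ ^ α := by
  rw [normPow, norm_smul, Real.norm_of_nonneg (by positivity),
    rpow_sub_one_mul_self (norm_nonneg w) hα]

lemma normPow_normPow (hα : α ≠ 0) (β : ℝ) (w : E) :
    normPow β (normPow α w) = normPow (α * β) w := by
  rcases eq_or_ne w 0 with rfl | hw
  · simp [normPow]
  have hw : 0 < ‖w‖ := norm_pos_iff.2 hw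
  rw [normPow, norm_normPow hα, normPow, normPow, smul_smul, ← Real.rpow_mul hw.le,
    ← Real.rpow_add hw]
  ring_nf

lemma normPow_inv_normPow (hα : α ≠ 0) (w : E) : normPow α⁻¹ (normPow α w) = w := by
  rw [normPow_normPow hα, mul_inv_cancel₀ hα, normPow, sub_self, Real.rpow_zero, one_smul]

lemma norm_normPow_sub_normPow_le_max (hα : 0 < α) (a b : E) :
    ‖normPow α b - normPow α a‖ ≤
      (1 + max 1 α) * (max ‖a‖ ‖b‖ ^ (α - 1) * ‖b - a‖) := by
  wlog hab : ‖a‖ ≤ ‖b‖ generalizing a b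
  · simpa only [max_comm ‖b‖, norm_sub_rev a, norm_sub_rev (normPow α a)] using
      this b a (le_of_not_ge hab)
  have split : normPow α b - normPow α a =
      ‖b‖ ^ (α - 1) • (b - a) + (‖b‖ ^ (α - 1) - ‖a‖ ^ (α - 1)) • a := by
    unfold normPow
    module
  rw [max_eq_right hab]
  calc ‖normPow α b - normPow α a‖
      ≤ ‖b‖ ^ (α - 1) * ‖b - a‖ + |‖b‖ ^ (α - 1) - ‖a‖ ^ (α - 1)| * ‖a‖ := by
        rw [split]
        refine (norm_add_le _ _).trans_eq ?_
        rw [norm_smul, norm_smul, Real.norm_of_nonneg (by positivity), Real.norm_eq_abs]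
    _ ≤ ‖b‖ ^ (α - 1) * ‖b - a‖ + max 1 α * (‖b‖ ^ (α - 1) * (‖b‖ - ‖a‖)) := by
        gcongr ‖b‖ ^ (α - 1) * ‖b - a‖ + ?_
        exact abs_rpow_sub_one_sub_rpow_sub_one_mul_le hα (norm_nonneg a) hab
    _ ≤ ‖b‖ ^ (α - 1) * ‖b - a‖ + max 1 α * (‖b‖ ^ (α - 1) * ‖b - a‖) := by
        gcongr
        exact norm_sub_norm_le b a
    _ = (1 + max 1 α) * (‖b‖ ^ (α - 1) * ‖b - a‖) := by ring

lemma max_rpow_mul_norm_sub_le (hα : 0 < α) (a b : E) :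
    max ‖a‖ ‖b‖ ^ (α - 1) * ‖b - a‖ ≤
      (1 + max 1 α⁻¹) * ‖normPow α b - normPow α a‖ := by
  set r := max ‖a‖ ‖b‖
  have hr : 0 ≤ r := le_max_of_le_left (norm_nonneg a)
  have inverse_bound : ‖b - a‖ ≤
      (1 + max 1 α⁻¹) * ((r ^ α) ^ (α⁻¹ - 1) * ‖normPow α b - normPow α a‖) := by
    simpa only [normPow_inv_normPow hα.ne', norm_normPow hα.ne', ← Real.rpow_max (norm_nonneg a)
      (norm_nonneg b) hα.le] using
      norm_normPow_sub_normPow_le_max (inv_pos.2 hα) (normPow α a) (normPow α b)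
  have scales_cancel : r ^ (α - 1) * (r ^ α) ^ (α⁻¹ - 1) ≤ 1 := by
    rw [← Real.rpow_mul hr, mul_sub, mul_inv_cancel₀ hα.ne', mul_one, ← neg_sub α 1,
      Real.rpow_neg hr]
    exact mul_inv_le_one
  calc r ^ (α - 1) * ‖b - a‖
      ≤ r ^ (α - 1) *
          ((1 + max 1 α⁻¹) * ((r ^ α) ^ (α⁻¹ - 1) * ‖normPow α b - normPow α a‖)) := by gcongr
    _ = (r ^ (α - 1) * (r ^ α) ^ (α⁻¹ - 1)) *
          ((1 + max 1 α⁻¹) * ‖normPow α b - normPow α a‖) := by ring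
    _ ≤ (1 + max 1 α⁻¹) * ‖normPow α b - normPow α a‖ :=
        mul_le_of_le_one_left (by positivity) scales_cancel

lemma norm_normPow_sub_normPow_le_add (hα : 0 < α) (a b : E) :
    ‖normPow α b - normPow α a‖ ≤
      2 ^ |α - 1| * (1 + max 1 α) * ((‖a‖ + ‖b‖) ^ (α - 1) * ‖b - a‖) :=
  calc ‖normPow α b - normPow α a‖
      ≤ (1 + max 1 α) * (max ‖a‖ ‖b‖ ^ (α - 1) * ‖b - a‖) :=
        norm_normPow_sub_normPow_le_max hα a b
    _ ≤ (1 + max 1 α) * (2 ^ |α - 1| * (‖a‖ + ‖b‖) ^ (α - 1) * ‖b - a‖) := by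
        gcongr
        exact max_rpow_le_two_rpow_mul_add_rpow _ (norm_nonneg a) (norm_nonneg b)
    _ = 2 ^ |α - 1| * (1 + max 1 α) * ((‖a‖ + ‖b‖) ^ (α - 1) * ‖b - a‖) := by ring

lemma add_rpow_mul_norm_sub_le (hα : 0 < α) (a b : E) :
    (‖a‖ + ‖b‖) ^ (α - 1) * ‖b - a‖ ≤
      2 ^ |α - 1| * (1 + max 1 α⁻¹) * ‖normPow α b - normPow α a‖ :=
  calc (‖a‖ + ‖b‖) ^ (α - 1) * ‖b - a‖
      ≤ 2 ^ |α - 1| * max ‖a‖ ‖b‖ ^ (α - 1) * ‖b - a‖ := by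
        gcongr
        exact add_rpow_le_two_rpow_mul_max_rpow _ (norm_nonneg a) (norm_nonneg b)
    _ = 2 ^ |α - 1| * (max ‖a‖ ‖b‖ ^ (α - 1) * ‖b - a‖) := by ring
    _ ≤ 2 ^ |α - 1| * ((1 + max 1 α⁻¹) * ‖normPow α b - normPow α a‖) := by
        gcongr 2 ^ |α - 1| * ?_
        exact max_rpow_mul_norm_sub_le hα a b
    _ = 2 ^ |α - 1| * (1 + max 1 α⁻¹) * ‖normPow α b - normPow α a‖ := by ring

end NormPower

theorem pow_diff_equiv_general (α : ℝ) (hα : 0 < α) :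
    ∃ c : ℝ, 1 ≤ c ∧ ∀ (E : Type*) [NormedAddCommGroup E] [NormedSpace ℝ E] (a b : E),
      (1 / c) * ‖normPow α b - normPow α a‖ ≤ (‖a‖ + ‖b‖) ^ (α - 1) * ‖b - a‖ ∧
      (‖a‖ + ‖b‖) ^ (α - 1) * ‖b - a‖ ≤ c * ‖normPow α b - normPow α a‖ := by
  set C : ℝ → ℝ := fun β ↦ 2 ^ |α - 1| * (1 + max 1 β)
  have one_le_C : 1 ≤ C α :=
    one_le_mul_of_one_le_of_one_le (Real.one_le_rpow one_le_two (abs_nonneg _))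
      (le_add_of_nonneg_right (by positivity))
  have one_le_max : 1 ≤ max (C α) (C α⁻¹) := le_max_of_le_left one_le_C
  refine ⟨max (C α) (C α⁻¹), one_le_max, fun E _ _ a b ↦ ⟨?_, ?_⟩⟩
  · rw [one_div_mul_eq_div, div_le_iff₀' (zero_lt_one.trans_le one_le_max)]
    refine (norm_normPow_sub_normPow_le_add hα a b).trans ?_
    gcongr
    exact le_max_left _ _
  · refine (add_rpow_mul_norm_sub_le hα a b).trans ?_
    gcongr
    exact le_max_right _ _

/-- For any `α > 0` there exists `c = c(α) ≥ 1` such that for all `a, b ∈ ℝ^N`, `N ∈ ℕ`: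
`(1/c)|b^⟨α⟩ − a^⟨α⟩| ≤ (|a| + |b|)^{α−1}|b − a| ≤ c|b^⟨α⟩ − a^⟨α⟩|`. -/
theorem pow_diff_equiv (α : ℝ) (hα : 0 < α) :
    ∃ c : ℝ, 1 ≤ c ∧ ∀ (N : ℕ) (a b : Vec N),
      (1 / c) * ‖pw α b - pw α a‖ ≤ (‖a‖ + ‖b‖) ^ (α - 1) * ‖b - a‖ ∧
      (‖a‖ + ‖b‖) ^ (α - 1) * ‖b - a‖ ≤ c * ‖pw α b - pw α a‖ := by
  obtain ⟨c, one_le_c, hc⟩ := pow_diff_equiv_general α hα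
  exact ⟨c, one_le_c, fun N ↦ hc (Vec N)⟩
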